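/- Let m:ℕ→ℕ satisfy m(n) ≤ 3n−6 and m(n) = 3n − o(n) as n→∞ (that is, (3n−m(n))/n → 0). Then the probability that P_{n,m(n)} is connected tends to 1 as n→∞. -/

import Mathlib

/-!
Write `d = 3n - m = o(n)` and fix a large constant `C`. Contracting an edge that lies in no triangle
loses one vertex but only one edge, hence lowers `d` by two, while it affects boundedly many other
edges if both ends have degree at most `C`; as `d` cannot become negative, a planar graph has `O(d)`
triangle-free edges between vertices of degree at most `C`. Vertices of larger degree meet at most
`5n/2` of the `3n - d` edges, so `Ω(n) - O(d)` vertices `x` of degree at most `C` lie in a triangle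
`x, a, y` with `deg a ≤ C`.

If the graph is disconnected, replace `xy` by `xv`, where `v` is a vertex of degree at most five
outside the component of `x`. The new edge is a bridge, so the outcome is planar with the same
number of edges. It contains `xv` as one of its `O(d)` triangle-free edges between vertices of
degree at most `C`, and the path `x, a, y`, along which `y` is recovered in at most `C ^ 2` ways.
Hence `n` times the number of disconnected graphs is `O(d)` times the number of all graphs.
-/

open SimpleGraph Filter Asymptotics

/-- `H` is a minor of `G`: to each vertex of `H` we can assign a connected nonempty
branch set in `G`, pairwise disjoint, with an edge of `G` between the branch sets of
any two adjacent vertices of `H`. -/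
def IsMinor {α β : Type*} (H : SimpleGraph α) (G : SimpleGraph β) : Prop :=
  ∃ f : α → Set β,
    (∀ a, (G.induce (f a)).Connected) ∧
    (∀ a b, a ≠ b → Disjoint (f a) (f b)) ∧
    (∀ a b, H.Adj a b → ∃ u ∈ f a, ∃ v ∈ f b, G.Adj u v)

/-- A graph is planar iff it has neither a `K₅`-minor nor a `K₃,₃`-minor
(Wagner's theorem). -/
def IsPlanar {V : Type*} (G : SimpleGraph V) : Prop :=
  ¬ IsMinor (completeGraph (Fin 5)) G ∧
    ¬ IsMinor (completeBipartiteGraph (Fin 3) (Fin 3)) G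

/-- The number of edges of a graph. -/
noncomputable def edgeCount {V : Type*} (G : SimpleGraph V) : ℕ :=
  G.edgeSet.ncard

/-- The degree of a vertex. -/
noncomputable def vertexDegree {V : Type*} (G : SimpleGraph V) (v : V) : ℕ :=
  (G.neighborSet v).ncard

/-- `𝒫(n,m)`: the set of labelled planar graphs on `{1,…,n}` with exactly `m` edges. -/
def planarSet (n m : ℕ) : Set (SimpleGraph (Fin n)) :=
  {G | IsPlanar G ∧ edgeCount G = m}

/-- The probability that the uniform random planar graph `P_{n,m}` satisfies `P`. -/
noncomputable def planarProb (n m : ℕ) (P : SimpleGraph (Fin n) → Prop) : ℝ :=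
  ({G ∈ planarSet n m | P G}.ncard : ℝ) / ((planarSet n m).ncard : ℝ)

/-- The number of pendant edges (edges incident to a vertex of degree 1). -/
noncomputable def pendantCount {V : Type*} (G : SimpleGraph V) : ℕ :=
  {e ∈ G.edgeSet | ∃ v ∈ e, vertexDegree G v = 1}.ncard

/-- The set of addable non-edges of `G`: non-edges whose addition keeps the graph planar. -/
def addableSet {V : Type*} (G : SimpleGraph V) : Set (Sym2 V) :=
  {e | ¬ e.IsDiag ∧ e ∉ G.edgeSet ∧ IsPlanar (G ⊔ SimpleGraph.fromEdgeSet {e})}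

/-- `add(n,m)`: the minimum number of addable non-edges over all graphs in `𝒫(n,m)`. -/
noncomputable def addMin (n m : ℕ) : ℕ :=
  sInf ((fun G => (addableSet G).ncard) '' planarSet n m)

/-- `W` carries an induced order-preserving copy of `H` in `G`: the increasing bijection
from `{1,…,h}` to `W` is an isomorphism between `H` and the induced subgraph `G[W]`. -/
def IsOrderCopy {h n : ℕ} (H : SimpleGraph (Fin h)) (G : SimpleGraph (Fin n))
    (W : Finset (Fin n)) : Prop :=
  ∃ hW : W.card = h,
    ∀ i j : Fin h,
      H.Adj i j ↔ G.Adj ((W.orderIsoOfFin hW i : Fin n)) ((W.orderIsoOfFin hW j : Fin n))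

/-- `W` is the vertex set of a connected component of `G`. -/
def IsComponent {V : Type*} (G : SimpleGraph V) (W : Finset V) : Prop :=
  (G.induce (W : Set V)).Connected ∧ ∀ v ∈ W, ∀ u, G.Adj v u → u ∈ W

/-- The number of components of `G` admitting an order-preserving isomorphism to `H`. -/
noncomputable def numOrderComponents {h n : ℕ} (H : SimpleGraph (Fin h))
    (G : SimpleGraph (Fin n)) : ℕ :=
  {W : Finset (Fin n) | IsComponent G W ∧ IsOrderCopy H G W}.ncard

/-- The number of distinct cycles (as subgraphs, identified with their edge sets) of
length at most `k` in `S`. -/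
noncomputable def cycleCountLe {V : Type*} (S : SimpleGraph V) (k : ℕ) : ℕ :=
  {E : Set (Sym2 V) | ∃ (v : V) (c : S.Walk v v),
    c.IsCycle ∧ c.length ≤ k ∧ {e | e ∈ c.edges} = E}.ncard

/-! ### Double counting -/

theorem ncard_eq_sum_ncard_section {α β : Type*} [Fintype α] [Finite β] (R : Set (α × β)) :
    R.ncard = ∑ a, {b | (a, b) ∈ R}.ncard := by
  classical
  have := Fintype.ofFinite β
  rw [Set.ncard_eq_toFinset_card', Finset.card_eq_sum_card_fiberwise (f := Prod.fst)
    (t := Finset.univ) fun _ _ => Finset.mem_univ _]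
  refine Finset.sum_congr rfl fun a _ => ?_
  rw [← Set.ncard_coe_finset,
    ← Set.ncard_image_of_injective {b | (a, b) ∈ R} (Prod.mk_right_injective a)]
  congr 1
  ext ⟨a', b⟩
  simp only [Finset.coe_filter, Set.mem_toFinset, Set.mem_ofPred_eq, Set.mem_image, Prod.mk.injEq]
  grind

theorem ncard_le_mul_of_ncard_section_le {α β : Type*} [Finite α] [Finite β] {R : Set (α × β)}
    {t : Set α} {k : ℕ} (hR : ∀ p ∈ R, p.1 ∈ t) (hk : ∀ a ∈ t, {b | (a, b) ∈ R}.ncard ≤ k) :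
    R.ncard ≤ k * t.ncard := by
  classical
  have := Fintype.ofFinite α
  rw [ncard_eq_sum_ncard_section, Set.ncard_eq_toFinset_card', mul_comm, ← smul_eq_mul]
  refine (Finset.sum_subset (Finset.subset_univ t.toFinset) fun a _ ha => ?_).symm.trans_le
    (Finset.sum_le_card_nsmul _ _ k fun a ha => hk a (Set.mem_toFinset.mp ha))
  have : {b | (a, b) ∈ R} = ∅ :=
    Set.eq_empty_of_forall_notMem fun b hb => ha (Set.mem_toFinset.mpr (hR _ hb))
  rw [this, Set.ncard_empty]

theorem ncard_mul_le_of_le_ncard_section {α β : Type*} [Finite α] [Finite β] {R : Set (α × β)}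
    {s : Set α} {k c : ℕ} (hk : ∀ a ∈ s, k ≤ c * {b | (a, b) ∈ R}.ncard) :
    s.ncard * k ≤ c * R.ncard := by
  classical
  have := Fintype.ofFinite α
  rw [ncard_eq_sum_ncard_section, Set.ncard_eq_toFinset_card', Finset.mul_sum, ← smul_eq_mul]
  exact (Finset.card_nsmul_le_sum _ _ k fun a ha => hk a (Set.mem_toFinset.mp ha)).trans
    (Finset.sum_le_univ_sum_of_nonneg fun _ => Nat.zero_le _)

/-! ### Minors -/

theorem induce_connected_iff {V : Type*} {G : SimpleGraph V} {s : Set V} :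
    (G.induce s).Connected ↔ s.Nonempty ∧ ∀ t : Set V, (s ∩ t).Nonempty →
      (∀ u ∈ s, ∀ w ∈ s, G.Adj u w → u ∈ t → w ∈ t) → s ⊆ t := by
  constructor
  · rintro h
    refine ⟨Set.nonempty_coe_sort.mp h.nonempty, ?_⟩
    rintro t ⟨u, hus, hut⟩ hclosed w hw
    by_contra hwt
    obtain ⟨p⟩ := h.preconnected ⟨u, hus⟩ ⟨w, hw⟩
    obtain ⟨d, -, hd, hd'⟩ := p.exists_boundary_dart (Subtype.val ⁻¹' t) hut hwt
    exact hd' (hclosed _ d.fst.2 _ d.snd.2 d.adj hd)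
  · rintro ⟨⟨u, hu⟩, h⟩
    refine (connected_iff_exists_forall_reachable _).mpr ⟨⟨u, hu⟩, fun w => ?_⟩
    obtain ⟨_, hw⟩ := h {w | ∃ hw : w ∈ s, (G.induce s).Reachable ⟨u, hu⟩ ⟨w, hw⟩}
      ⟨u, hu, hu, .rfl⟩ (fun _ _ _ hb hab ⟨_, hr⟩ => ⟨hb, hr.trans (Adj.reachable hab)⟩) w.2
    exact hw

theorem induce_singleton_connected {V : Type*} (G : SimpleGraph V) (v : V) :
    (G.induce {v}).Connected := by
  rw [induce_singleton_eq_top]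
  exact connected_top

theorem induce_biUnion_connected {α β : Type*} {H : SimpleGraph α} {G : SimpleGraph β}
    {g : α → Set β} {s : Set α} (hs : (H.induce s).Connected)
    (hg : ∀ a ∈ s, (G.induce (g a)).Connected)
    (hadj : ∀ a b, H.Adj a b → ∃ u ∈ g a, ∃ v ∈ g b, G.Adj u v) :
    (G.induce (⋃ a ∈ s, g a)).Connected := by
  rw [induce_connected_iff] at hs ⊢
  obtain ⟨⟨a, ha⟩, hs⟩ := hs
  obtain ⟨b, hb⟩ := (induce_connected_iff.mp (hg a ha)).1
  refine ⟨⟨b, Set.mem_biUnion ha hb⟩, ?_⟩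
  rintro t ⟨u, hu, hut⟩ hclosed
  have subset_of_mem : ∀ a ∈ s, ∀ u ∈ g a, u ∈ t → g a ⊆ t := fun a ha u hu hut =>
    (induce_connected_iff.mp (hg a ha)).2 t ⟨u, hu, hut⟩ fun u hu w hw =>
      hclosed u (Set.mem_biUnion ha hu) w (Set.mem_biUnion ha hw)
  obtain ⟨a₀, ha₀, hua₀⟩ := Set.mem_iUnion₂.mp hu
  refine Set.iUnion₂_subset (hs {a | g a ⊆ t} ⟨a₀, ha₀, subset_of_mem a₀ ha₀ u hua₀ hut⟩ ?_)
  intro a ha b hb hab hat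
  obtain ⟨u, hu, w, hw, huw⟩ := hadj a b hab
  exact subset_of_mem b hb w hw
    (hclosed u (Set.mem_biUnion ha hu) w (Set.mem_biUnion hb hw) huw (hat hu))

theorem IsMinor.trans {α β γ : Type*} {K : SimpleGraph γ} {H : SimpleGraph α}
    {G : SimpleGraph β} (hKH : IsMinor K H) (hHG : IsMinor H G) : IsMinor K G := by
  obtain ⟨f, hf_conn, hf_disj, hf_adj⟩ := hKH
  obtain ⟨g, hg_conn, hg_disj, hg_adj⟩ := hHG
  refine ⟨fun c => ⋃ a ∈ f c, g a,
    fun c => induce_biUnion_connected (hf_conn c) (fun a _ => hg_conn a) hg_adj,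
    fun c d hcd => ?_, fun c d hcd => ?_⟩
  · simp only [Set.disjoint_iUnion_left, Set.disjoint_iUnion_right]
    exact fun a ha b hb => hg_disj b a fun h => (hf_disj c d hcd).ne_of_mem hb ha h
  · obtain ⟨a, ha, b, hb, hab⟩ := hf_adj c d hcd
    obtain ⟨u, hu, w, hw, huw⟩ := hg_adj a b hab
    exact ⟨u, Set.mem_biUnion ha hu, w, Set.mem_biUnion hb hw, huw⟩

theorem isMinor_of_injective {α β : Type*} {H : SimpleGraph α} {G : SimpleGraph β} (φ : α → β)
    (hφ : Function.Injective φ) (hadj : ∀ a b, H.Adj a b → G.Adj (φ a) (φ b)) : IsMinor H G :=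
  ⟨fun a => {φ a}, fun _ => induce_singleton_connected G _,
    fun _ _ hab => Set.disjoint_singleton.mpr (hφ.ne hab),
    fun a b hab => ⟨_, rfl, _, rfl, hadj a b hab⟩⟩

theorem IsPlanar.of_isMinor {α β : Type*} {H : SimpleGraph α} {G : SimpleGraph β}
    (hG : IsPlanar G) (h : IsMinor H G) : IsPlanar H :=
  ⟨fun h' => hG.1 (h'.trans h), fun h' => hG.2 (h'.trans h)⟩

theorem IsPlanar.mono {V : Type*} {H G : SimpleGraph V} (hG : IsPlanar G) (h : H ≤ G) :
    IsPlanar H :=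
  hG.of_isMinor (isMinor_of_injective id Function.injective_id fun _ _ hab => h hab)

theorem IsPlanar.induce {V : Type*} {G : SimpleGraph V} (hG : IsPlanar G) (s : Set V) :
    IsPlanar (G.induce s) :=
  hG.of_isMinor (isMinor_of_injective Subtype.val Subtype.val_injective fun _ _ hab => hab)

/-- The contraction of the edge `xa`: the vertex `a` is deleted and `x` inherits its
neighbors. -/
def contract {V : Type*} (G : SimpleGraph V) (x a : V) : SimpleGraph {v : V // v ≠ a} :=
  fromRel fun p q => G.Adj p q ∨ (p = x ∧ G.Adj a q)

theorem contract_isMinor {V : Type*} {G : SimpleGraph V} {x a : V} (h : G.Adj x a) :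
    IsMinor (contract G x a) G := by
  classical
  refine ⟨fun p => if (p : V) = x then {x, a} else {(p : V)}, ?_, ?_, ?_⟩
  · intro p
    beta_reduce
    by_cases hpx : (p : V) = x
    · rw [if_pos hpx]
      exact induce_pair_connected_of_adj h
    · rw [if_neg hpx]
      exact induce_singleton_connected G p
  · rintro ⟨p, hp⟩ ⟨q, hq⟩ hpq
    rw [Set.disjoint_left]
    grind
  · rintro p q ⟨-, (hpq | ⟨hpx, hpq⟩) | (hpq | ⟨hqx, hpq⟩)⟩
    · exact ⟨p, by grind, q, by grind, hpq⟩
    · exact ⟨a, by grind, q, by grind, hpq⟩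
    · exact ⟨p, by grind, q, by grind, hpq.symm⟩
    · exact ⟨p, by grind, a, by grind, hpq.symm⟩

/-! ### Counting edges -/

theorem ncard_darts {V : Type*} [Finite V] (G : SimpleGraph V) :
    {p : V × V | G.Adj p.1 p.2}.ncard = 2 * edgeCount G := by
  classical
  have := Fintype.ofFinite V
  rw [ncard_eq_sum_ncard_section, edgeCount, ← coe_edgeFinset, Set.ncard_coe_finset,
    ← G.sum_degrees_eq_twice_card_edges]
  refine Finset.sum_congr rfl fun v _ => ?_
  rw [← card_neighborFinset_eq_degree, ← Set.ncard_coe_finset, coe_neighborFinset]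
  rfl

theorem ncard_darts_within {V : Type*} [Finite V] (G : SimpleGraph V) (U : Set V) :
    {p : V × V | G.Adj p.1 p.2 ∧ p.1 ∈ U ∧ p.2 ∈ U}.ncard = 2 * edgeCount (G.induce U) := by
  rw [← ncard_darts, ← Set.ncard_image_of_injective _
    (Subtype.val_injective.prodMap Subtype.val_injective)]
  congr 1
  ext ⟨u, w⟩
  simp

theorem exists_vertexDegree_lt {V : Type*} [Finite V] {G : SimpleGraph V} {k : ℕ}
    (h : 2 * edgeCount G < k * Nat.card V) : ∃ v, vertexDegree G v < k := by
  by_contra! hk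
  have := ncard_mul_le_of_le_ncard_section (R := {p : V × V | G.Adj p.1 p.2})
    (s := Set.univ) (c := 1) fun v _ => (hk v).trans (one_mul _).ge
  rw [ncard_darts, Set.ncard_univ, mul_comm] at this
  omega

theorem exists_subgraph_edgeCount {V : Type*} [Finite V] {G : SimpleGraph V} {k : ℕ}
    (hk : k ≤ edgeCount G) : ∃ H ≤ G, edgeCount H = k := by
  obtain ⟨s, hs, hsk⟩ := Set.exists_subset_card_eq hk
  have hsE : (fromEdgeSet s).edgeSet = s := by
    rw [edgeSet_fromEdgeSet, sdiff_eq_left, Set.disjoint_left]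
    exact fun e he => G.not_isDiag_of_mem_edgeSet (hs he)
  exact ⟨fromEdgeSet s, by rwa [← edgeSet_subset_edgeSet, hsE], by rw [edgeCount, hsE, hsk]⟩

/-- Contraction identifies the edges `xw` and `aw` for each common neighbor `w`, and loses
the edge `xa`. -/
theorem edgeCount_le_contract {V : Type*} [Finite V] {G : SimpleGraph V} {x a : V}
    (h : G.Adj x a) :
    edgeCount G ≤ edgeCount (contract G x a) + 1 + (G.commonNeighbors x a).ncard := by
  classical
  let L : Set (Sym2 V) := insert s(x, a) ((fun w => s(a, w)) '' G.commonNeighbors x a)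
  let π : V → {v : V // v ≠ a} := fun u => if hu : u = a then ⟨x, h.ne⟩ else ⟨u, hu⟩
  have hπ : ∀ u, (π u : V) = if u = a then x else u := by
    intro u
    simp only [π]
    split_ifs <;> rfl
  have hL : L.ncard ≤ (G.commonNeighbors x a).ncard + 1 :=
    (Set.ncard_insert_le _ _).trans (Nat.add_le_add_right (Set.ncard_image_le (Set.toFinite _)) 1)
  have hcontract : (G.edgeSet \ L).ncard ≤ edgeCount (contract G x a) := by
    refine Set.ncard_le_ncard_of_injOn (Sym2.map π) ?_ ?_ (Set.toFinite _)
    · intro e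
      induction e with | _ u w
      rintro ⟨he, heL⟩
      simp only [L, Set.mem_insert_iff, Set.mem_image, mem_commonNeighbors, fromRel_adj,
        mem_edgeSet, Sym2.map_mk, contract, ne_eq, Subtype.ext_iff, hπ, Sym2.eq_iff] at he heL ⊢
      grind [G.adj_comm, G.irrefl]
    · intro e he e' he' hee
      induction e with | _ u w
      induction e' with | _ u' w'
      obtain ⟨he, heL⟩ := he
      obtain ⟨he', heL'⟩ := he'
      simp only [L, Set.mem_insert_iff, Set.mem_image, mem_commonNeighbors,
        mem_edgeSet, Sym2.map_mk, Subtype.ext_iff, hπ, Sym2.eq_iff] at he heL he' heL' hee ⊢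
      grind [G.adj_comm, G.irrefl]
  have := Set.ncard_le_ncard_sdiff_add_ncard G.edgeSet L
  unfold edgeCount at *
  omega

/-! ### Planar graphs have few edges -/

theorem isMinor_of_isNClique {V : Type*} {G : SimpleGraph V} {n : ℕ} {s : Finset V}
    (h : G.IsNClique n s) : IsMinor (completeGraph (Fin n)) G :=
  let φ := topEmbeddingOfNotCliqueFree fun hfree => hfree s h
  isMinor_of_injective φ φ.injective fun _ _ => φ.map_rel_iff.mpr

theorem isMinor_completeGraph_of_lt {ι V : Type*} [LinearOrder ι] {G : SimpleGraph V}
    (f : ι → Set V) (hconn : ∀ i, (G.induce (f i)).Connected)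
    (hdisj : ∀ i j, i < j → Disjoint (f i) (f j))
    (hadj : ∀ i j, i < j → ∃ u ∈ f i, ∃ v ∈ f j, G.Adj u v) : IsMinor (completeGraph ι) G := by
  refine ⟨f, hconn, fun i j hij => ?_, fun i j hij => ?_⟩
  · exact hij.lt_or_gt.elim (hdisj i j) fun h => (hdisj j i h).symm
  · rcases hij.lt_or_gt with h | h
    · exact hadj i j h
    · obtain ⟨u, hu, v, hv, huv⟩ := hadj j i h
      exact ⟨v, hv, u, hu, huv.symm⟩

theorem isMinor_K5_of_adj {V : Type*} {G : SimpleGraph V} {v a b c d e : V}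
    (hab : a ≠ b) (hva : G.Adj v a) (hvb : G.Adj v b) (hvc : G.Adj v c) (hvd : G.Adj v d)
    (hve : G.Adj v e) (hac : G.Adj a c) (had : G.Adj a d) (hae : G.Adj a e) (hbc : G.Adj b c)
    (hbd : G.Adj b d) (hbe : G.Adj b e) (hde : G.Adj d e) (hcd : c ≠ d) (hce : c ≠ e) :
    IsMinor (completeGraph (Fin 5)) G := by
  refine isMinor_completeGraph_of_lt ![{v}, {a}, {b, c}, {d}, {e}] ?_ ?_ ?_
  · intro i
    fin_cases i
    exacts [induce_singleton_connected G v, induce_singleton_connected G a,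
      induce_pair_connected_of_adj hbc, induce_singleton_connected G d,
      induce_singleton_connected G e]
  · intro i j hij
    fin_cases i <;> fin_cases j <;> simp [hva.ne, hvb.ne, hvc.ne, hvd.ne, hve.ne, hab, hac.ne,
      had.ne, hae.ne, hbd.ne', hbe.ne', hcd.symm, hce.symm, hde.ne] at hij ⊢
  · intro i j hij
    fin_cases i <;> fin_cases j <;> simp_all

theorem adj_of_three_le_ncard_commonNeighbors {V : Type*} [Finite V] {G : SimpleGraph V}
    {v w z z' : V} (hdeg : vertexDegree G v ≤ 5) (hw : 3 ≤ (G.commonNeighbors v w).ncard)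
    (hvw : G.Adj v w) (hvz : G.Adj v z) (hvz' : G.Adj v z') (hwz : w ≠ z) (hwz' : w ≠ z')
    (hzz' : z ≠ z') (h : ¬ G.Adj w z) : G.Adj w z' := by
  by_contra h'
  have hdisj : Disjoint {w, z, z'} (G.commonNeighbors v w) := by
    simp [mem_commonNeighbors, h, h']
  have hsub : {w, z, z'} ∪ G.commonNeighbors v w ⊆ G.neighborSet v := by
    rintro u ((rfl | rfl | rfl) | hu)
    exacts [hvw, hvz, hvz', hu.1]
  have := Set.ncard_le_ncard hsub
  rw [Set.ncard_union_eq hdisj, Set.ncard_eq_three.mpr ⟨w, z, z', hwz, hwz', hzz', rfl⟩] at this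
  unfold vertexDegree at hdeg
  omega

theorem isMinor_K5_of_three_le_ncard_commonNeighbors {V : Type*} [Finite V] {G : SimpleGraph V}
    {v : V} (hdeg : vertexDegree G v ≤ 5) (hne : (G.neighborSet v).Nonempty)
    (hv : ∀ w, G.Adj v w → 3 ≤ (G.commonNeighbors v w).ncard) :
    IsMinor (completeGraph (Fin 5)) G := by
  classical
  have := Fintype.ofFinite V
  have hadj : ∀ {w z z'}, G.Adj v w → G.Adj v z → G.Adj v z' → w ≠ z → w ≠ z' → z ≠ z' →
      ¬ G.Adj w z → G.Adj w z' := fun hw =>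
    adj_of_three_le_ncard_commonNeighbors hdeg (hv _ hw) hw
  have hthree : ∀ {a}, G.Adj v a → ∃ c d e, c ∈ G.commonNeighbors v a ∧
      d ∈ G.commonNeighbors v a ∧ e ∈ G.commonNeighbors v a ∧ c ≠ d ∧ c ≠ e ∧ d ≠ e := fun ha =>
    (Set.two_lt_ncard_iff).mp (hv _ ha)
  by_cases hclique : G.IsClique (G.neighborSet v)
  · obtain ⟨a, hva⟩ := hne
    obtain ⟨c, d, e, ⟨hvc, hac⟩, ⟨hvd, had⟩, ⟨hve, hae⟩, hcd, hce, hde⟩ := hthree hva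
    have hcde : G.IsNClique 3 {c, d, e} :=
      is3Clique_triple_iff.mpr ⟨hclique hvc hvd hcd, hclique hvc hve hce, hclique hvd hve hde⟩
    rw [mem_neighborSet] at *
    exact isMinor_of_isNClique ((hcde.insert (a := a) (by simp [*])).insert (a := v) (by simp [*]))
  · obtain ⟨a, hva, b, hvb, hab, hnab⟩ : ∃ a, G.Adj v a ∧ ∃ b, G.Adj v b ∧ a ≠ b ∧
        ¬ G.Adj a b := by
      simpa [isClique_iff, Set.Pairwise] using hclique
    obtain ⟨c, d, e, ⟨hvc, hac⟩, ⟨hvd, had⟩, ⟨hve, hae⟩, hcd, hce, hde⟩ := hthree hva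
    have hb : ∀ {z}, G.Adj v z → G.Adj a z → G.Adj b z := fun hvz haz =>
      hadj hvb hva hvz hab.symm (fun h => hnab (h ▸ haz)) haz.ne fun h => hnab h.symm
    by_cases hde' : G.Adj d e
    · exact isMinor_K5_of_adj hab hva hvb hvc hvd hve hac had hae (hb hvc hac) (hb hvd had)
        (hb hve hae) hde' hcd hce
    · exact isMinor_K5_of_adj hab hva hvb hve hvd hvc hae had hac (hb hve hae) (hb hvd had)
        (hb hvc hac) (hadj hvd hve hvc hde hcd.symm hce.symm hde') hde.symm hce.symm

theorem card_subtype_ne_add_one {V : Type*} [Finite V] (a : V) :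
    Nat.card {v : V // v ≠ a} + 1 = Nat.card V := by
  rw [← Set.ncard_compl_add_ncard {a}, Set.ncard_singleton]
  rfl

/-- In a minimal counterexample every edge lies in three triangles, as contracting it would
otherwise give a smaller one; a vertex of degree at most five then produces a `K₅`-minor. -/
theorem edgeCount_add_three_le_of_card_eq {n : ℕ} (hn : 1 ≤ n) :
    ∀ {V : Type*} [Finite V] {G : SimpleGraph V}, Nat.card V = n → IsPlanar G →
      edgeCount G + 3 ≤ 3 * n := by
  induction n, hn using Nat.le_induction with
  | base =>
    intro V _ G hV _
    have := (Nat.card_eq_one_iff_unique.mp hV).1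
    simp [edgeCount, Subsingleton.elim G ⊥]
  | succ n _ ih =>
    intro V _ G hV hG
    by_contra hG_edges
    obtain ⟨H, hHG, hH⟩ := exists_subgraph_edgeCount (G := G) (k := 3 * n + 1) (by omega)
    have hH_planar := hG.mono hHG
    obtain ⟨v, hv⟩ : ∃ v, vertexDegree H v < 6 := exists_vertexDegree_lt (by omega)
    have hcard (a : V) : Nat.card {u : V // u ≠ a} = n := by
      have := card_subtype_ne_add_one a
      omega
    refine hH_planar.1 (isMinor_K5_of_three_le_ncard_commonNeighbors (Nat.lt_succ_iff.mp hv) ?_ ?_)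
    · by_contra hv_isolated
      have hwithin := ncard_darts_within H {u | u ≠ v}
      have hdarts : {p : V × V | H.Adj p.1 p.2 ∧ p.1 ≠ v ∧ p.2 ≠ v} =
          {p : V × V | H.Adj p.1 p.2} := by
        ext ⟨u, w⟩
        rw [Set.not_nonempty_iff_eq_empty, Set.eq_empty_iff_forall_notMem] at hv_isolated
        have : H.Adj u w → u ≠ v ∧ w ≠ v := fun h =>
          ⟨fun hu => hv_isolated w (hu ▸ h), fun hw => hv_isolated u (hw ▸ h.symm)⟩
        simpa using this
      have := ih (hcard v) (hH_planar.induce {u | u ≠ v})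
      simp only [Set.mem_ofPred_eq, hdarts, ncard_darts] at hwithin
      omega
    · intro w hvw
      have := edgeCount_le_contract hvw
      have := ih (hcard w) (hH_planar.of_isMinor (contract_isMinor hvw))
      omega

theorem IsPlanar.edgeCount_add_three_le {V : Type*} [Finite V] [Nonempty V] {G : SimpleGraph V}
    (hG : IsPlanar G) : edgeCount G + 3 ≤ 3 * Nat.card V :=
  edgeCount_add_three_le_of_card_eq Nat.card_pos rfl hG

theorem IsPlanar.edgeCount_le {V : Type*} [Finite V] {G : SimpleGraph V} (hG : IsPlanar G) :
    edgeCount G ≤ 3 * Nat.card V := by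
  cases isEmpty_or_nonempty V
  · simp [edgeCount, Subsingleton.elim G ⊥]
  · have := hG.edgeCount_add_three_le
    omega

theorem IsPlanar.exists_ncard_neighbors_le {V : Type*} [Finite V] {G : SimpleGraph V}
    (hG : IsPlanar G) {U : Set V} (hU : U.Nonempty) :
    ∃ v ∈ U, {w ∈ U | G.Adj v w}.ncard ≤ 5 := by
  have := hU.to_subtype
  have hedges := (hG.induce U).edgeCount_add_three_le
  obtain ⟨⟨v, hvU⟩, hv⟩ : ∃ v, vertexDegree (G.induce U) v < 6 :=
    exists_vertexDegree_lt (by omega)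
  refine ⟨v, hvU, ?_⟩
  have himage : {w ∈ U | G.Adj v w} = Subtype.val '' (G.induce U).neighborSet ⟨v, hvU⟩ := by
    ext w
    simp [and_comm]
  rw [himage, Set.ncard_image_of_injective _ Subtype.val_injective]
  exact Nat.lt_succ_iff.mp hv

theorem IsPlanar.ncard_triangles_within_le {V : Type*} [Finite V] {G : SimpleGraph V}
    (hG : IsPlanar G) (U : Set V) : {T ∈ G.cliqueSet 3 | ↑T ⊆ U}.ncard ≤ 10 * U.ncard := by
  classical
  have := Fintype.ofFinite V
  induction h : U.ncard generalizing U with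
  | zero =>
    rw [Set.ncard_eq_zero] at h
    rw [Nat.mul_zero, Nat.le_zero, Set.ncard_eq_zero, Set.eq_empty_iff_forall_notMem]
    rintro T ⟨hT, hTU⟩
    have : T = ∅ := by simpa [h] using hTU
    simpa [this] using hT.card_eq
  | succ n ih =>
    obtain ⟨v, hvU, hv⟩ := hG.exists_ncard_neighbors_le
      (U := U) (Set.nonempty_of_ncard_ne_zero (by omega))
    have hU : (U \ {v}).ncard = n := by
      rw [Set.ncard_sdiff_singleton_of_mem hvU, h, Nat.add_sub_cancel]
    let W := {w ∈ U | G.Adj v w}.toFinset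
    have hW : W.card ≤ 5 := by rwa [← Set.ncard_eq_toFinset_card']
    have hsub : {T ∈ G.cliqueSet 3 | ↑T ⊆ U} ⊆
        {T ∈ G.cliqueSet 3 | ↑T ⊆ U \ {v}} ∪ ↑((W.powersetCard 2).image (insert v)) := by
      rintro T ⟨hT, hTU⟩
      by_cases hvT : v ∈ T
      · refine Or.inr (Finset.mem_coe.mpr (Finset.mem_image.mpr
          ⟨T.erase v, Finset.mem_powersetCard.mpr ⟨fun w hw => ?_, ?_⟩, Finset.insert_erase hvT⟩))
        · obtain ⟨hwv, hwT⟩ := Finset.mem_erase.mp hw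
          exact Set.mem_toFinset.mpr ⟨hTU hwT, hT.isClique hvT hwT hwv.symm⟩
        · rw [Finset.card_erase_of_mem hvT, hT.card_eq]
      · exact Or.inl ⟨hT, Set.subset_sdiff_singleton hTU hvT⟩
    have hpairs : ((W.powersetCard 2).image (insert v)).card ≤ 10 :=
      Finset.card_image_le.trans ((Finset.card_powersetCard 2 W).trans_le
        (Nat.choose_le_choose 2 hW))
    have := (Set.ncard_le_ncard hsub).trans (Set.ncard_union_le _ _)
    have := ih _ hU
    rw [Set.ncard_coe_finset] at *
    omega

theorem IsPlanar.ncard_triangles_le {V : Type*} [Finite V] {G : SimpleGraph V}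
    (hG : IsPlanar G) : (G.cliqueSet 3).ncard ≤ 10 * Nat.card V := by
  have := hG.ncard_triangles_within_le Set.univ
  rw [Set.ncard_univ] at this
  simpa only [Set.subset_univ, and_true, Set.ofPred_mem_eq] using this

/-! ### Few vertices have three neighbors in a given set -/

theorem isMinor_of_subdivision {α V : Type*} {H : SimpleGraph α} {G : SimpleGraph V}
    (φ : α → V) (ψ : Sym2 α → V) (hφ : Function.Injective φ) (hψ : Set.InjOn ψ H.edgeSet)
    (hφψ : ∀ e ∈ H.edgeSet, ∀ a, ψ e ≠ φ a) (hadj : ∀ e ∈ H.edgeSet, ∀ a ∈ e, G.Adj (ψ e) (φ a)) :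
    IsMinor H G := by
  -- each subdividing vertex is merged into an arbitrarily chosen end of its edge
  let root : Sym2 α → α := fun e => (Quot.out e).1
  have hroot : ∀ e, root e ∈ e := Sym2.out_fst_mem
  refine ⟨fun a => insert (φ a) (ψ '' {e ∈ H.edgeSet | root e = a}), fun a => ?_,
    fun a b hab => ?_, fun a b hab => ?_⟩
  · rw [induce_connected_iff]
    refine ⟨⟨_, Set.mem_insert _ _⟩, ?_⟩
    rintro t ⟨u, hu, hut⟩ hclosed
    have hat : φ a ∈ t := by
      rcases hu with rfl | hu
      · exact hut
      · obtain ⟨e, ⟨he, hea⟩, rfl⟩ := id hu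
        exact hclosed _ (Or.inr hu) _ (Or.inl rfl) (hadj e he a (hea ▸ hroot e)) hut
    rintro w (rfl | hw)
    · exact hat
    · obtain ⟨e, ⟨he, hea⟩, rfl⟩ := id hw
      exact hclosed _ (Or.inl rfl) _ (Or.inr hw) (hadj e he a (hea ▸ hroot e)).symm hat
  · rw [Set.disjoint_left]
    rintro _ (rfl | ⟨e, ⟨he, rfl⟩, rfl⟩) (hb | ⟨e', ⟨he', rfl⟩, h⟩)
    exacts [hab (hφ hb), hφψ e' he' a h, hφψ e he b hb, hab (congrArg root (hψ he he' h.symm))]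
  · have hmem : ∀ c, root s(a, b) = c → ψ s(a, b) ∈ ψ '' {e ∈ H.edgeSet | root e = c} :=
      fun c hc => ⟨_, ⟨hab, hc⟩, rfl⟩
    rcases Sym2.mem_iff.mp (hroot s(a, b)) with h | h
    · exact ⟨_, Or.inr (hmem a h), φ b, Or.inl rfl, hadj _ hab b (Sym2.mem_mk_right a b)⟩
    · exact ⟨φ a, Or.inl rfl, _, Or.inr (hmem b h), (hadj _ hab a (Sym2.mem_mk_left a b)).symm⟩

theorem isMinor_K33_of_adj {V : Type*} {G : SimpleGraph V} (φ φ' : Fin 3 ↪ V)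
    (h : ∀ i j, G.Adj (φ i) (φ' j)) : IsMinor (completeBipartiteGraph (Fin 3) (Fin 3)) G := by
  refine isMinor_of_injective (Sum.elim φ φ')
    (φ.injective.sumElim φ'.injective fun i j => (h i j).ne) ?_
  rintro (i | i) (j | j) hij
  · simp at hij
  · exact h i j
  · exact (h j i).symm
  · simp at hij

theorem IsPlanar.ncard_three_adj_le_two {V : Type*} [Finite V] {G : SimpleGraph V}
    (hG : IsPlanar G) (φ : Fin 3 ↪ V) : {x | ∀ i, G.Adj x (φ i)}.ncard ≤ 2 := by
  by_contra! h
  obtain ⟨a, b, c, ha, hb, hc, hab, hac, hbc⟩ := (Set.two_lt_ncard_iff).mp h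
  refine hG.2 (isMinor_K33_of_adj ⟨![a, b, c], ?_⟩ φ fun i j => ?_)
  · intro i j
    fin_cases i <;> fin_cases j <;> simp [hab, hac, hbc, hab.symm, hac.symm, hbc.symm]
  · fin_cases i
    exacts [ha j, hb j, hc j]

/-- The map `ψ` subdivides the edges of a graph `H` on `S` inside `G`: distinct edges go to
distinct vertices in `X`, each adjacent in `G` to both ends of its edge. -/
def IsSubdivision {V : Type*} (G : SimpleGraph V) {S : Set V} (X : Set V) (H : SimpleGraph S)
    (ψ : Sym2 S → V) : Prop :=
  Set.InjOn ψ H.edgeSet ∧ ∀ e ∈ H.edgeSet, ψ e ∈ X ∧ ∀ a ∈ e, G.Adj (ψ e) a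

theorem IsSubdivision.isMinor {V : Type*} {G : SimpleGraph V} {S X : Set V}
    {H : SimpleGraph S} {ψ : Sym2 S → V} (h : IsSubdivision G X H ψ) (hXS : Disjoint X S) :
    IsMinor H G :=
  isMinor_of_subdivision Subtype.val ψ Subtype.val_injective h.1
    (fun e he a => hXS.ne_of_mem (h.2 e he).1 a.2) fun e he => (h.2 e he).2

theorem IsSubdivision.update {V : Type*} {G : SimpleGraph V} {S X : Set V}
    {H : SimpleGraph S} {ψ : Sym2 S → V} [DecidableEq (Sym2 S)] (h : IsSubdivision G X H ψ)
    {x : V} (hx : x ∈ X) (hxψ : x ∉ ψ '' H.edgeSet) {a b : S} (hxa : G.Adj x a)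
    (hxb : G.Adj x b) (hab : ¬ H.Adj a b) :
    IsSubdivision G X (H ⊔ edge a b) (Function.update ψ s(a, b) x) := by
  have hedge : ∀ e ∈ (H ⊔ edge a b).edgeSet, e = s(a, b) ∨ e ≠ s(a, b) ∧ e ∈ H.edgeSet := by
    intro e he
    induction e with | _ u w
    simp only [mem_edgeSet, sup_adj, edge_adj, ne_eq, Sym2.eq_iff] at he ⊢
    tauto
  refine ⟨fun e he e' he' hee' => ?_, fun e he => ?_⟩
  · rcases hedge e he with rfl | ⟨hne, he⟩ <;> rcases hedge e' he' with rfl | ⟨hne', he'⟩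
    · rfl
    · rw [Function.update_self, Function.update_of_ne hne'] at hee'
      exact absurd ⟨e', he', hee'.symm⟩ hxψ
    · rw [Function.update_self, Function.update_of_ne hne] at hee'
      exact absurd ⟨e, he, hee'⟩ hxψ
    · rw [Function.update_of_ne hne, Function.update_of_ne hne'] at hee'
      exact h.1 he he' hee'
  · rcases hedge e he with rfl | ⟨hne, he⟩
    · rw [Function.update_self]
      refine ⟨hx, fun c hc => ?_⟩
      rcases Sym2.mem_iff.mp hc with rfl | rfl
      exacts [hxa, hxb]
    · rw [Function.update_of_ne hne]
      exact h.2 e he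

theorem exists_isSubdivision_isClique {V : Type*} [Finite V] (G : SimpleGraph V) (S X : Set V) :
    ∃ (H : SimpleGraph S) (ψ : Sym2 S → V), IsSubdivision G X H ψ ∧
      ∀ x ∈ X, x ∉ ψ '' H.edgeSet → H.IsClique {a | G.Adj x a} := by
  classical
  obtain ⟨H, ⟨ψ, hψ⟩, hmax⟩ :=
    (Set.toFinite {H : SimpleGraph S | ∃ ψ, IsSubdivision G X H ψ}).exists_maximal
      ⟨⊥, fun e => (Quot.out e).1, by simp [IsSubdivision]⟩
  refine ⟨H, ψ, hψ, fun x hx hxψ a hxa b hxb hab => ?_⟩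
  by_contra hnadj
  exact hnadj (hmax ⟨_, hψ.update hx hxψ hxa hxb hnadj⟩ le_sup_left
    (Or.inr ((edge_adj a b a b).mpr ⟨Or.inl ⟨rfl, rfl⟩, hab⟩)))

/-- Let `H` be a maximal graph on `S` subdivided by vertices from outside `S`. At most `3 * |S|`
vertices are used up; each of the others sees a triangle of the planar graph `H`, and no three of
them see the same one, as this would be a `K₃,₃`. -/
theorem IsPlanar.ncard_three_neighbors_le {V : Type*} [Finite V] {G : SimpleGraph V}
    (hG : IsPlanar G) (S : Set V) :
    {x | x ∉ S ∧ 3 ≤ {a ∈ S | G.Adj x a}.ncard}.ncard ≤ 23 * S.ncard := by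
  classical
  set X := {x | x ∉ S ∧ 3 ≤ {a ∈ S | G.Adj x a}.ncard}
  obtain ⟨H, ψ, hψ, hclique⟩ := exists_isSubdivision_isClique G S X
  have hH : IsPlanar H := hG.of_isMinor (hψ.isMinor (Set.disjoint_left.mpr fun x hx => hx.1))
  have hsub : (ψ '' H.edgeSet).ncard ≤ 3 * S.ncard :=
    (Set.ncard_image_le (Set.toFinite _)).trans hH.edgeCount_le
  let R : Set (Finset S × V) := {p | p.1 ∈ H.cliqueSet 3 ∧ ∀ a ∈ p.1, G.Adj p.2 a}
  have hR : R.ncard ≤ 2 * (H.cliqueSet 3).ncard := by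
    refine ncard_le_mul_of_ncard_section_le (fun p hp => hp.1) fun T hT => ?_
    refine (Set.ncard_le_ncard fun x hx i => ?_).trans (hG.ncard_three_adj_le_two
      (((T.equivFinOfCardEq hT.card_eq).symm.toEmbedding.trans (Function.Embedding.subtype _)).trans
        (Function.Embedding.subtype _)))
    exact hx.2 _ (Subtype.prop _)
  have hrest : X \ ψ '' H.edgeSet ⊆ Prod.snd '' R := by
    rintro x ⟨hxX, hxψ⟩
    obtain ⟨a, b, c, ⟨ha, hxa⟩, ⟨hb, hxb⟩, ⟨hc, hxc⟩, hab, hac, hbc⟩ :=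
      (Set.two_lt_ncard_iff).mp hxX.2
    have hne : ∀ {u w : V} {hu : u ∈ S} {hw : w ∈ S}, u ≠ w → (⟨u, hu⟩ : S) ≠ ⟨w, hw⟩ :=
      fun h => Subtype.coe_ne_coe.mp h
    have hx := hclique x hxX hxψ
    refine ⟨({⟨a, ha⟩, ⟨b, hb⟩, ⟨c, hc⟩}, x), ⟨is3Clique_triple_iff.mpr
      ⟨hx hxa hxb (hne hab), hx hxa hxc (hne hac), hx hxb hxc (hne hbc)⟩, ?_⟩, rfl⟩
    simp [hxa, hxb, hxc]
  have := (Set.ncard_le_ncard hrest).trans (Set.ncard_image_le (Set.toFinite _))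
  have := Set.ncard_le_ncard_sdiff_add_ncard X (ψ '' H.edgeSet)
  have := hH.ncard_triangles_le
  rw [Nat.card_coe_set_eq] at this
  omega

theorem IsPlanar.ncard_darts_into_le {V : Type*} [Finite V] {G : SimpleGraph V}
    (hG : IsPlanar G) (S : Set V) :
    {p : V × V | G.Adj p.1 p.2 ∧ p.2 ∈ S}.ncard ≤ 2 * Nat.card V + 144 * S.ncard := by
  let U := S ∪ {x | x ∉ S ∧ 3 ≤ {a ∈ S | G.Adj x a}.ncard}
  have hU : U.ncard ≤ 24 * S.ncard := by
    have := hG.ncard_three_neighbors_le S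
    exact (Set.ncard_union_le _ _).trans (by omega)
  have hout : {p : V × V | p.1 ∉ U ∧ G.Adj p.1 p.2 ∧ p.2 ∈ S}.ncard ≤ 2 * Uᶜ.ncard := by
    refine ncard_le_mul_of_ncard_section_le (fun p hp => hp.1) fun x hx => ?_
    have hx2 : {a ∈ S | G.Adj x a}.ncard ≤ 2 := by
      by_contra! h3
      exact hx (Or.inr ⟨fun hxS => hx (Or.inl hxS), h3⟩)
    refine (Set.ncard_le_ncard ?_).trans hx2
    exact fun a ha => ⟨ha.2.2, ha.2.1⟩
  have hin : {p : V × V | G.Adj p.1 p.2 ∧ p.1 ∈ U ∧ p.2 ∈ U}.ncard ≤ 2 * (3 * U.ncard) := by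
    rw [ncard_darts_within]
    exact Nat.mul_le_mul_left 2 (hG.induce U).edgeCount_le
  have hcover : {p : V × V | G.Adj p.1 p.2 ∧ p.2 ∈ S} ⊆
      {p | p.1 ∉ U ∧ G.Adj p.1 p.2 ∧ p.2 ∈ S} ∪ {p | G.Adj p.1 p.2 ∧ p.1 ∈ U ∧ p.2 ∈ U} := by
    rintro p ⟨hp, hpS⟩
    by_cases hpU : p.1 ∈ U
    exacts [Or.inr ⟨hp, hpU, Or.inl hpS⟩, Or.inl ⟨hpU, hp, hpS⟩]
  have := (Set.ncard_le_ncard hcover).trans (Set.ncard_union_le _ _)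
  have := Set.ncard_le_card Uᶜ
  omega

theorem ncard_touching_le_of_symm {V : Type*} [Finite V] {R : Set (V × V)}
    (hR : ∀ p ∈ R, p.swap ∈ R) (Z : Set V) :
    {p ∈ R | p.1 ∈ Z ∨ p.2 ∈ Z}.ncard ≤ 2 * {p ∈ R | p.2 ∈ Z}.ncard := by
  have hsub : {p ∈ R | p.1 ∈ Z ∨ p.2 ∈ Z} ⊆
      Prod.swap '' {p ∈ R | p.2 ∈ Z} ∪ {p ∈ R | p.2 ∈ Z} := by
    rintro p ⟨hp, hpZ | hpZ⟩
    exacts [Or.inl ⟨p.swap, ⟨hR p hp, hpZ⟩, p.swap_swap⟩, Or.inr ⟨hp, hpZ⟩]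
  have := (Set.ncard_le_ncard hsub).trans (Set.ncard_union_le _ _)
  rw [Set.ncard_image_of_injective _ Prod.swap_injective] at this
  omega

/-! ### Edges outside triangles -/

/-- The darts, as ordered pairs of adjacent vertices, that join two vertices of degree at most `C`
and whose edge lies in no triangle. -/
def sparseDarts {V : Type*} (G : SimpleGraph V) (C : ℕ) : Set (V × V) :=
  {p | G.Adj p.1 p.2 ∧ vertexDegree G p.1 ≤ C ∧ vertexDegree G p.2 ≤ C ∧
    G.commonNeighbors p.1 p.2 = ∅}

theorem swap_mem_sparseDarts {V : Type*} {G : SimpleGraph V} {C : ℕ} {p : V × V}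
    (hp : p ∈ sparseDarts G C) : p.swap ∈ sparseDarts G C :=
  ⟨hp.1.symm, hp.2.2.1, hp.2.1, (G.commonNeighbors_symm p.2 p.1).trans hp.2.2.2⟩

theorem ncard_sparseDarts_touching_le {V : Type*} [Finite V] (G : SimpleGraph V) (C : ℕ)
    (Z : Set V) : {p ∈ sparseDarts G C | p.1 ∈ Z ∨ p.2 ∈ Z}.ncard ≤ 2 * (C * Z.ncard) := by
  refine (ncard_touching_le_of_symm (fun _ => swap_mem_sparseDarts) Z).trans
    (Nat.mul_le_mul_left 2 ?_)
  rw [← Set.ncard_image_of_injective _ Prod.swap_injective]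
  calc (Prod.swap '' {p ∈ sparseDarts G C | p.2 ∈ Z}).ncard
      ≤ C * {z ∈ Z | vertexDegree G z ≤ C}.ncard := by
        refine ncard_le_mul_of_ncard_section_le ?_ fun z hz =>
          (Set.ncard_le_ncard ?_).trans hz.2
        · rintro _ ⟨p, ⟨hp, hpZ⟩, rfl⟩
          exact ⟨hpZ, hp.2.2.1⟩
        · rintro w ⟨p, ⟨hp, -⟩, hpw⟩
          obtain ⟨rfl, rfl⟩ := Prod.mk.inj hpw
          exact hp.1.symm
    _ ≤ C * Z.ncard := Nat.mul_le_mul_left C (Set.ncard_le_ncard fun z hz => hz.1)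

theorem adj_of_contract_adj {V : Type*} {G : SimpleGraph V} {x a : V} {p q : {v : V // v ≠ a}}
    (hpx : (p : V) ≠ x) (hpa : ¬ G.Adj p a) (h : (contract G x a).Adj p q) : G.Adj p q := by
  rcases h.2 with (h | ⟨h, -⟩) | (h | ⟨-, h⟩)
  exacts [h, absurd h hpx, h.symm, absurd h.symm hpa]

theorem vertexDegree_contract_le {V : Type*} [Finite V] {G : SimpleGraph V} {x a : V}
    {p : {v : V // v ≠ a}} (hpx : (p : V) ≠ x) (hpa : ¬ G.Adj p a) :
    vertexDegree (contract G x a) p ≤ vertexDegree G p :=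
  Set.ncard_le_ncard_of_injOn Subtype.val (fun _ => adj_of_contract_adj hpx hpa)
    Subtype.val_injective.injOn

theorem mem_sparseDarts_contract {V : Type*} [Finite V] {G : SimpleGraph V} {C : ℕ} {x a : V}
    {p q : {v : V // v ≠ a}} (h : ((p : V), (q : V)) ∈ sparseDarts G C) (hpx : (p : V) ≠ x)
    (hpa : ¬ G.Adj p a) (hqx : (q : V) ≠ x) (hqa : ¬ G.Adj q a) :
    (p, q) ∈ sparseDarts (contract G x a) C := by
  obtain ⟨hpq, hp, hq, hcommon⟩ := h
  refine ⟨⟨fun h => hpq.ne (congrArg Subtype.val h), Or.inl (Or.inl hpq)⟩,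
    (vertexDegree_contract_le hpx hpa).trans hp, (vertexDegree_contract_le hqx hqa).trans hq,
    Set.eq_empty_of_forall_notMem fun z hz => ?_⟩
  have : (z : V) ∈ G.commonNeighbors p q :=
    ⟨adj_of_contract_adj hpx hpa hz.1, adj_of_contract_adj hqx hqa hz.2⟩
  rwa [hcommon] at this

theorem ncard_sparseDarts_le_contract {V : Type*} [Finite V] {G : SimpleGraph V} {C : ℕ}
    {x a : V} (h : (x, a) ∈ sparseDarts G C) :
    (sparseDarts G C).ncard ≤ (sparseDarts (contract G x a) C).ncard + 4 * C ^ 2 := by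
  let Z := G.neighborSet x ∪ G.neighborSet a
  have hZ : Z.ncard ≤ C + C := (Set.ncard_union_le _ _).trans (Nat.add_le_add h.2.1 h.2.2.1)
  have hcover : sparseDarts G C ⊆ {p ∈ sparseDarts G C | p.1 ∈ Z ∨ p.2 ∈ Z} ∪
      Prod.map Subtype.val Subtype.val '' sparseDarts (contract G x a) C := by
    rintro ⟨u, w⟩ huw
    by_cases hZ : u ∈ Z ∨ w ∈ Z
    · exact Or.inl ⟨huw, hZ⟩
    · simp only [Z, Set.mem_union, mem_neighborSet, not_or] at hZ
      obtain ⟨⟨hxu, hau⟩, hxw, haw⟩ := hZ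
      have hne : ∀ z, ¬ G.Adj x z → ¬ G.Adj a z → z ≠ x ∧ z ≠ a := fun z hx ha =>
        ⟨fun hz => ha (hz ▸ h.1.symm), fun hz => hx (hz ▸ h.1)⟩
      obtain ⟨hux, hua⟩ := hne u hxu hau
      obtain ⟨hwx, hwa⟩ := hne w hxw haw
      exact Or.inr ⟨(⟨u, hua⟩, ⟨w, hwa⟩), mem_sparseDarts_contract huw hux
        (fun h => hau h.symm) hwx fun h => haw h.symm, rfl⟩
  calc (sparseDarts G C).ncard
      ≤ 2 * (C * Z.ncard) + (sparseDarts (contract G x a) C).ncard :=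
        ((Set.ncard_le_ncard hcover).trans (Set.ncard_union_le _ _)).trans (Nat.add_le_add
          (ncard_sparseDarts_touching_le G C Z) (Set.ncard_image_le (Set.toFinite _)))
    _ ≤ 2 * (C * (C + C)) + (sparseDarts (contract G x a) C).ncard := by gcongr
    _ = (sparseDarts (contract G x a) C).ncard + 4 * C ^ 2 := by ring

/-- Contracting a sparse edge lowers the number of missing edges `d` by two. -/
theorem IsPlanar.ncard_sparseDarts_le {V : Type*} [Finite V] {G : SimpleGraph V}
    (hG : IsPlanar G) {d : ℕ} (hd : 3 * Nat.card V ≤ edgeCount G + d) (C : ℕ) :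
    (sparseDarts G C).ncard ≤ 2 * C ^ 2 * d := by
  induction d using Nat.strong_induction_on generalizing V with
  | _ d ih =>
    rcases (sparseDarts G C).eq_empty_or_nonempty with hempty | ⟨⟨x, a⟩, hxa⟩
    · simp [hempty]
    have := Nonempty.intro x
    have hbound := hG.edgeCount_add_three_le
    have hadj : G.Adj x a := hxa.1
    have hcontract := edgeCount_le_contract hadj
    rw [hxa.2.2.2, Set.ncard_empty] at hcontract
    have hcard := card_subtype_ne_add_one a
    have hrest := ih (d - 2) (by omega) (hG.of_isMinor (contract_isMinor hadj)) (by omega)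
    obtain ⟨d, rfl⟩ : ∃ d', d = d' + 2 := ⟨d - 2, by omega⟩
    calc (sparseDarts G C).ncard
        ≤ (sparseDarts (contract G x a) C).ncard + 4 * C ^ 2 := ncard_sparseDarts_le_contract hxa
      _ ≤ 2 * C ^ 2 * d + 4 * C ^ 2 := by simpa using hrest
      _ = 2 * C ^ 2 * (d + 2) := by ring

/-! ### Good vertices -/

/-- The vertices of degree at most `C` that lie in a triangle with another vertex of degree at
most `C`. A switching at `x` moves an edge of such a triangle from `x` into another component. -/
def goodVertices {V : Type*} (G : SimpleGraph V) (C : ℕ) : Set V :=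
  {x | vertexDegree G x ≤ C ∧
    ∃ a, G.Adj x a ∧ vertexDegree G a ≤ C ∧ (G.commonNeighbors x a).Nonempty}

theorem ncard_darts_le_goodVertices_add {V : Type*} [Finite V] (G : SimpleGraph V) (C : ℕ) :
    2 * edgeCount G ≤ C * (goodVertices G C).ncard + (sparseDarts G C).ncard +
      2 * {p : V × V | G.Adj p.1 p.2 ∧ p.2 ∈ {v | C < vertexDegree G v}}.ncard := by
  let S := {v | C < vertexDegree G v}
  have hgood : {p : V × V | p.1 ∈ goodVertices G C ∧ G.Adj p.1 p.2}.ncard ≤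
      C * (goodVertices G C).ncard :=
    ncard_le_mul_of_ncard_section_le (fun p hp => hp.1) fun x hx =>
      (Set.ncard_le_ncard fun w hw => hw.2).trans hx.1
  have htouch := ncard_touching_le_of_symm (R := {p : V × V | G.Adj p.1 p.2})
    (fun _ hp => hp.symm) S
  have hcover : {p : V × V | G.Adj p.1 p.2} ⊆
      ({p | p.1 ∈ goodVertices G C ∧ G.Adj p.1 p.2} ∪ sparseDarts G C) ∪
        {p ∈ {p : V × V | G.Adj p.1 p.2} | p.1 ∈ S ∨ p.2 ∈ S} := by
    intro p hp
    by_cases hS : p.1 ∈ S ∨ p.2 ∈ S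
    · exact Or.inr ⟨hp, hS⟩
    · obtain ⟨h1, h2⟩ := not_or.mp hS
      rcases (G.commonNeighbors p.1 p.2).eq_empty_or_nonempty with hcommon | hcommon
      · exact Or.inl (Or.inr ⟨hp, not_lt.mp h1, not_lt.mp h2, hcommon⟩)
      · exact Or.inl (Or.inl ⟨⟨not_lt.mp h1, p.2, hp, not_lt.mp h2, hcommon⟩, hp⟩)
  rw [← ncard_darts]
  refine (Set.ncard_le_ncard hcover).trans ((Set.ncard_union_le _ _).trans ?_)
  exact Nat.add_le_add ((Set.ncard_union_le _ _).trans (Nat.add_le_add_right hgood _)) htouch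

/-- At most `6n / C` vertices have degree above `C`, so for `C ≥ 1728 = 2 * 144 * 6` the edges at
them account for at most `5n` of the `6n - 2d` darts. -/
theorem IsPlanar.card_le_goodVertices {V : Type*} [Finite V] {G : SimpleGraph V}
    (hG : IsPlanar G) {d : ℕ} (hd : 3 * Nat.card V ≤ edgeCount G + d) {C : ℕ} (hC : 1728 ≤ C) :
    Nat.card V ≤ C * (goodVertices G C).ncard + (2 * C ^ 2 + 2) * d := by
  have hlarge : {v | C < vertexDegree G v}.ncard * C ≤
      1 * {p : V × V | G.Adj p.1 p.2}.ncard := by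
    refine ncard_mul_le_of_le_ncard_section fun v hv => ?_
    rw [one_mul]
    exact (Set.mem_ofPred.mp hv).le
  rw [ncard_darts] at hlarge
  have := hG.edgeCount_le
  have := Nat.mul_le_mul_left {v | C < vertexDegree G v}.ncard hC
  have := ncard_darts_le_goodVertices_add G C
  have := hG.ncard_darts_into_le {v | C < vertexDegree G v}
  have := hG.ncard_sparseDarts_le hd C
  rw [add_mul]
  omega

/-! ### Joining two components by an edge -/

/-- A 2-connected graph with at least three vertices: it stays connected when a vertex is deleted,
and every vertex has two neighbors. -/
def IsTwoConnected {α : Type*} (H : SimpleGraph α) : Prop :=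
  (∀ p, (H.induce {p}ᶜ).Connected) ∧ ∀ p, ∃ q, H.Adj p q ∧ ∃ r, H.Adj p r ∧ q ≠ r

theorem isTwoConnected_K5 : IsTwoConnected (completeGraph (Fin 5)) :=
  ⟨by decide, by decide⟩

instance decidableRelCompleteBipartiteGraphAdj (α β : Type*) :
    DecidableRel (completeBipartiteGraph α β).Adj :=
  fun _ _ => inferInstanceAs (Decidable (_ ∨ _))

theorem isTwoConnected_K33 : IsTwoConnected (completeBipartiteGraph (Fin 3) (Fin 3)) :=
  ⟨by decide +kernel, by decide⟩

section

variable {α V : Type*} {H : SimpleGraph α} {G : SimpleGraph V} {x v : V} {A : Set V}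

theorem mem_iff_mem_or_eq_of_sup_edge_adj (hA : ∀ u w, G.Adj u w → (u ∈ A ↔ w ∈ A)) {u w : V}
    (h : (G ⊔ edge x v).Adj u w) : (u ∈ A ↔ w ∈ A) ∨ u = x ∧ w = v ∨ u = v ∧ w = x := by
  rcases h with h | h
  · exact Or.inl (hA u w h)
  · grind

theorem mem_of_induce_sup_edge_connected (hA : ∀ u w, G.Adj u w → (u ∈ A ↔ w ∈ A)) (hv : v ∉ A)
    {s : Set V} (hs : ((G ⊔ edge x v).induce s).Connected) (h : (s ∩ A).Nonempty)
    (h' : ¬ s ⊆ A) : x ∈ s := by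
  by_contra hx
  refine h' ((induce_connected_iff.mp hs).2 A h fun u hu w _ huw huA => ?_)
  have := mem_iff_mem_or_eq_of_sup_edge_adj hA huw
  grind

/-- Mapping everything outside `A` to `x` turns paths in `G ⊔ edge x v` into paths inside `A`. -/
theorem induce_inter_connected (hA : ∀ u w, G.Adj u w → (u ∈ A ↔ w ∈ A)) (hv : v ∉ A)
    {s : Set V} (hs : ((G ⊔ edge x v).induce s).Connected)
    (h : (s ∩ A).Nonempty) : (G.induce (s ∩ A)).Connected := by
  classical
  rw [induce_connected_iff] at hs ⊢
  refine ⟨h, fun t ⟨u, ⟨hus, huA⟩, hut⟩ hclosed => ?_⟩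
  have hst := hs.2 {u | (if u ∈ A then u else x) ∈ t} ⟨u, hus, by simpa [huA] using hut⟩ <| by
    rintro p hp q hq (hpq | hpq) hpt
    · have := hA p q hpq
      grind
    · grind
  rintro w ⟨hws, hwA⟩
  simpa [hwA] using hst hws

theorem isMinor_of_meets (hA : ∀ u w, G.Adj u w → (u ∈ A ↔ w ∈ A)) (hv : v ∉ A)
    {f : α → Set V} (hf_conn : ∀ a, ((G ⊔ edge x v).induce (f a)).Connected)
    (hf_disj : ∀ a b, a ≠ b → Disjoint (f a) (f b))
    (hf_adj : ∀ a b, H.Adj a b → ∃ u ∈ f a, ∃ w ∈ f b, (G ⊔ edge x v).Adj u w)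
    (hf_meets : ∀ a, (f a ∩ A).Nonempty) : IsMinor H G := by
  refine ⟨fun a => f a ∩ A, fun a => induce_inter_connected hA hv (hf_conn a) (hf_meets a),
    fun a b hab => (hf_disj a b hab).mono Set.inter_subset_left Set.inter_subset_left,
    fun a b hab => ?_⟩
  have hx_unique : x ∈ f a → x ∉ f b := fun h => Set.disjoint_left.mp (hf_disj a b hab.ne) h
  have hx_mem : ∀ c, ∀ u ∈ f c, u ∉ A → x ∈ f c := fun c u hu huA =>
    mem_of_induce_sup_edge_connected hA hv (hf_conn c) (hf_meets c) fun h => huA (h hu)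
  obtain ⟨u, hu, w, hw, huw⟩ := hf_adj a b hab
  have := hx_mem a u hu
  have := hx_mem b w hw
  have := hA u w
  rcases huw with huw | huw <;> grind

theorem exists_forall_ne_subset [Nonempty α] (hH : ∀ p, (H.induce {p}ᶜ).Connected)
    (hA : ∀ u w, G.Adj u w → (u ∈ A ↔ w ∈ A)) (hv : v ∉ A)
    {f : α → Set V} (hf_conn : ∀ a, ((G ⊔ edge x v).induce (f a)).Connected)
    (hf_disj : ∀ a b, a ≠ b → Disjoint (f a) (f b))
    (hf_adj : ∀ a b, H.Adj a b → ∃ u ∈ f a, ∃ w ∈ f b, (G ⊔ edge x v).Adj u w) :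
    ∃ p, (∀ a ≠ p, x ∉ f a) ∧ ((∀ a ≠ p, f a ⊆ A) ∨ ∀ a ≠ p, f a ⊆ Aᶜ) := by
  obtain ⟨p, hp⟩ : ∃ p, ∀ a ≠ p, x ∉ f a := by
    by_cases! h : ∃ p, x ∈ f p
    · exact h.imp fun p hp a hap => Set.disjoint_right.mp (hf_disj a p hap) hp
    · exact ⟨Classical.arbitrary α, fun a _ => h a⟩
  refine ⟨p, hp, ?_⟩
  by_cases hmeets : ({p}ᶜ ∩ {a | (f a ∩ A).Nonempty}).Nonempty
  · have hpure : ∀ a ≠ p, (f a ∩ A).Nonempty → f a ⊆ A := fun a ha h => by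
      by_contra h'
      exact hp a ha (mem_of_induce_sup_edge_connected hA hv (hf_conn a) h h')
    refine Or.inl fun a ha => hpure a ha ?_
    refine (induce_connected_iff.mp (hH p)).2 _ hmeets (fun a ha b hb hab h => ?_) ha
    obtain ⟨u, hu, w, hw, huw⟩ := hf_adj a b hab
    have := hpure a ha h hu
    have := hp a ha
    have := hp b hb
    have := mem_iff_mem_or_eq_of_sup_edge_adj hA huw
    exact ⟨w, hw, by grind⟩
  · exact Or.inr fun a ha u hu huA => hmeets ⟨a, ha, u, hu, huA⟩

theorem IsTwoConnected.forall_meets_or_forall_meets_compl (hH : IsTwoConnected H)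
    (hA : ∀ u w, G.Adj u w → (u ∈ A ↔ w ∈ A)) (hx : x ∈ A) (hv : v ∉ A)
    {f : α → Set V} (hf_conn : ∀ a, ((G ⊔ edge x v).induce (f a)).Connected)
    (hf_disj : ∀ a b, a ≠ b → Disjoint (f a) (f b))
    (hf_adj : ∀ a b, H.Adj a b → ∃ u ∈ f a, ∃ w ∈ f b, (G ⊔ edge x v).Adj u w) :
    (∀ a, (f a ∩ A).Nonempty) ∨ ∀ a, (f a ∩ Aᶜ).Nonempty := by
  cases isEmpty_or_nonempty α
  · exact Or.inl isEmptyElim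
  obtain ⟨p, hp, hrest⟩ := exists_forall_ne_subset hH.1 hA hv hf_conn hf_disj hf_adj
  have hne : ∀ a, (f a).Nonempty := fun a => (induce_connected_iff.mp (hf_conn a)).1
  refine hrest.imp (fun hrest a => ?_) fun hrest a => ?_
  · rcases eq_or_ne a p with rfl | ha
    · obtain ⟨q, hq, -⟩ := hH.2 a
      obtain ⟨u, hu, w, hw, huw⟩ := hf_adj a q hq
      have := hrest q hq.ne' hw
      have := hp q hq.ne'
      have := mem_iff_mem_or_eq_of_sup_edge_adj hA huw
      exact ⟨u, hu, by grind⟩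
    · exact (hne a).mono fun u hu => ⟨hu, hrest a ha hu⟩
  · rcases eq_or_ne a p with rfl | ha
    · by_contra h
      have hv_mem : ∀ q, H.Adj a q → v ∈ f q := fun q hq => by
        obtain ⟨u, hu, w, hw, huw⟩ := hf_adj a q hq
        have := hrest q hq.ne' hw
        have : u ∈ A := of_not_not fun huA => h ⟨u, hu, huA⟩
        have := mem_iff_mem_or_eq_of_sup_edge_adj hA huw
        grind
      obtain ⟨q, hq, r, hr, hqr⟩ := hH.2 a
      exact (hf_disj q r hqr).ne_of_mem (hv_mem q hq) (hv_mem r hr) rfl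
    · exact (hne a).mono fun u hu => ⟨hu, hrest a ha hu⟩

/-- If the branch sets of a 2-connected minor of `G ⊔ edge x v` all meet one side of the new edge,
they can be restricted to that side; at most the one containing `x` meets both. -/
theorem IsTwoConnected.isMinor_of_isMinor_sup_edge (hH : IsTwoConnected H)
    (hxv : ¬ G.Reachable x v) (h : IsMinor H (G ⊔ edge x v)) : IsMinor H G := by
  obtain ⟨f, hf_conn, hf_disj, hf_adj⟩ := h
  have hA : ∀ u w, G.Adj u w → (u ∈ {u | G.Reachable x u} ↔ w ∈ {u | G.Reachable x u}) :=
    fun u w huw => ⟨fun h => h.trans huw.reachable, fun h => h.trans huw.symm.reachable⟩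
  rcases hH.forall_meets_or_forall_meets_compl hA (Reachable.refl x) hxv hf_conn hf_disj hf_adj
    with hmeets | hmeets
  · exact isMinor_of_meets hA hxv hf_conn hf_disj hf_adj hmeets
  · rw [edge_comm] at hf_conn hf_adj
    exact isMinor_of_meets (fun u w huw => not_congr (hA u w huw))
      (Set.notMem_compl_iff.mpr (Reachable.refl x)) hf_conn hf_disj hf_adj hmeets

theorem IsPlanar.sup_edge (hG : IsPlanar G) (hxv : ¬ G.Reachable x v) :
    IsPlanar (G ⊔ edge x v) :=
  ⟨fun h => hG.1 (isTwoConnected_K5.isMinor_of_isMinor_sup_edge hxv h),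
    fun h => hG.2 (isTwoConnected_K33.isMinor_of_isMinor_sup_edge hxv h)⟩

end

/-! ### Planar graphs with `3n - 6` edges -/

theorem induce_preimage_val_connected {V : Type*} {G : SimpleGraph V} {r s : Set V} (hsr : s ⊆ r)
    (hs : (G.induce s).Connected) :
    ((G.induce r).induce (Subtype.val ⁻¹' s : Set r)).Connected := by
  rw [induce_connected_iff] at hs ⊢
  obtain ⟨⟨u, hu⟩, hs⟩ := hs
  refine ⟨⟨⟨u, hsr hu⟩, hu⟩, fun t ⟨⟨w, hwr⟩, hw, hwt⟩ hclosed => ?_⟩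
  have hst := hs (Subtype.val '' t) ⟨w, hw, _, hwt, rfl⟩ <| by
    rintro _ ha b hb hab ⟨a, hat, rfl⟩
    exact ⟨⟨b, hsr hb⟩, hclosed a ha _ hb hab hat, rfl⟩
  rintro z hz
  obtain ⟨z', hz', hzz'⟩ := hst hz
  exact Subtype.ext hzz' ▸ hz'

theorem IsMinor.exists_induce_compl {α β : Type*} {H : SimpleGraph α} {G : SimpleGraph β}
    (h : IsMinor H G) {s : Set β} (hs : s.Finite) :
    ∃ t : Set α, t.ncard ≤ s.ncard ∧ IsMinor (H.induce tᶜ) (G.induce sᶜ) := by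
  obtain ⟨f, hf_conn, hf_disj, hf_adj⟩ := h
  have hsub : ∀ a ∈ {a | (f a ∩ s).Nonempty}ᶜ, f a ⊆ sᶜ := fun a ha u hu hus => ha ⟨u, hu, hus⟩
  refine ⟨{a | (f a ∩ s).Nonempty}, ?_, fun a => Subtype.val ⁻¹' f a,
    fun a => induce_preimage_val_connected (hsub a a.2) (hf_conn a),
    fun a b hab => (hf_disj a b (Subtype.coe_injective.ne hab)).preimage _, fun a b hab => ?_⟩
  · choose g hg using fun a : {a | (f a ∩ s).Nonempty} => a.2
    have := hs.to_subtype
    refine Nat.card_le_card_of_injective (fun a => (⟨g a, (hg a).2⟩ : s)) fun a b hab => ?_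
    by_contra hne
    exact (hf_disj a b (Subtype.coe_injective.ne hne)).ne_of_mem (hg a).1 (hg b).1
      (congrArg Subtype.val hab)
  · obtain ⟨u, hu, w, hw, huw⟩ := hf_adj a b hab
    exact ⟨⟨u, hsub a a.2 hu⟩, hu, ⟨w, hsub b b.2 hw⟩, hw, huw⟩

theorem ordConnected_of_induce_connected {β : Type*} [LinearOrder β] {G : SimpleGraph β}
    (hG : G ≤ hasse β) {s : Set β} (hs : (G.induce s).Connected) : s.OrdConnected := by
  refine ⟨fun u hu w hw z ⟨huz, hzw⟩ => ?_⟩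
  by_contra hz
  have hsz := (induce_connected_iff.mp hs).2 (Set.Iio z)
    ⟨u, hu, huz.lt_of_ne fun h => hz (h ▸ hu)⟩ fun p _ q hq hpq hpz => by
      rcases hasse_adj.mp (hG hpq) with h | h
      · exact (not_lt.mp fun hzq => h.2 hpz hzq).lt_of_ne fun h' => hz (h' ▸ hq)
      · exact h.lt.trans hpz
  exact hzw.not_gt (hsz hw)

/-- Take for `e a` any point of the branch set of `a`: the union of two adjacent branch sets is an
interval. -/
theorem IsMinor.exists_injective_lt_iff_lt {α β : Type*} [LinearOrder β] {H : SimpleGraph α}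
    {G : SimpleGraph β} (hG : G ≤ hasse β) (h : IsMinor H G) :
    ∃ e : α → β, Function.Injective e ∧
      ∀ a b c, H.Adj a b → H.Adj a c → b ≠ c → (e b < e a ↔ e a < e c) := by
  obtain ⟨f, hf_conn, hf_disj, hf_adj⟩ := h
  choose e he using fun a => (induce_connected_iff.mp (hf_conn a)).1
  have eq_of_mem : ∀ a b, e a ∈ f b → a = b := fun a b h => by
    by_contra hab
    exact (hf_disj a b hab).ne_of_mem (he a) h rfl
  have hinj : Function.Injective e := fun a b hab => eq_of_mem a b (hab ▸ he b)
  have not_between : ∀ a b c, H.Adj a b → c ≠ a → c ≠ b → e c ∉ Set.uIcc (e a) (e b) := by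
    intro a b c hab hca hcb hc
    obtain ⟨u, hu, w, hw, huw⟩ := hf_adj a b hab
    have hunion := ordConnected_of_induce_connected hG
      (connected_induce_union (hf_conn a).preconnected (hf_conn b).preconnected hu hw huw)
    exact (hunion.uIcc_subset (.inl (he a)) (.inr (he b)) hc).elim
      (hca <| eq_of_mem c a ·) (hcb <| eq_of_mem c b ·)
  refine ⟨e, hinj, fun a b c hab hac hbc => ?_⟩
  have := not_between a b c hab hac.ne' hbc.symm
  have := not_between a c b hac hab.ne' hbc
  have := hinj.ne hbc
  have := hinj.ne hab.ne
  have := hinj.ne hac.ne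
  grind [Set.mem_uIcc]

theorem exists_triangle_avoiding (t : Finset (Fin 5)) (ht : t.card ≤ 2) :
    ∃ a ∉ t, ∃ b ∉ t, ∃ c ∉ t, a ≠ b ∧ a ≠ c ∧ b ≠ c := by
  revert t
  decide

set_option synthInstance.maxSize 500 in
theorem exists_claw_or_cycle_avoiding (t : Finset (Fin 3 ⊕ Fin 3)) (ht : t.card ≤ 2) :
    (∃ a, .inl a ∉ t ∧ ∀ i, .inr i ∉ t) ∨ (∃ a, .inr a ∉ t ∧ ∀ i, .inl i ∉ t) ∨
      ∃ a b, a ≠ b ∧ .inl a ∉ t ∧ .inl b ∉ t ∧ ∃ c d, c ≠ d ∧ .inr c ∉ t ∧ .inr d ∉ t := by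
  revert t
  decide +kernel

/-- Deleting two vertices of `K₅` leaves a triangle, and of `K₃,₃` a claw or a 4-cycle; none of
these is a minor of a path. -/
theorem isPlanar_of_induce_compl_le_hasse {β : Type*} [LinearOrder β] {G : SimpleGraph β}
    {s : Set β} (hfin : s.Finite) (hs : s.ncard ≤ 2) (hG : G.induce sᶜ ≤ hasse ↥sᶜ) :
    IsPlanar G := by
  constructor <;> intro h <;> obtain ⟨t, ht, hminor⟩ := h.exists_induce_compl hfin <;>
    obtain ⟨t, rfl⟩ := t.toFinite.exists_finset_coe <;> rw [Set.ncard_coe_finset] at ht <;>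
    obtain ⟨e, he, hside⟩ := hminor.exists_injective_lt_iff_lt hG <;>
    simp only [comap_adj, Subtype.forall] at hside
  · obtain ⟨a, ha, b, hb, c, hc, hab, hac, hbc⟩ := exists_triangle_avoiding t (ht.trans hs)
    have := he.ne (a₁ := ⟨a, ha⟩) (a₂ := ⟨b, hb⟩) (by simpa using hab)
    have := hside a ha b hb c hc hab hac (by simpa using hbc)
    have := hside b hb a ha c hc hab.symm hbc (by simpa using hac)
    have := hside c hc a ha b hb hac.symm hbc.symm (by simpa using hab)
    grind
  · rcases exists_claw_or_cycle_avoiding t (ht.trans hs) with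
      ⟨a, ha, h⟩ | ⟨a, ha, h⟩ | ⟨a, b, hab, ha, hb, c, d, hcd, hc, hd⟩
    · have := hside _ ha (.inr 0) (h 0) (.inr 1) (h 1) (by simp) (by simp) (by simp)
      have := hside _ ha (.inr 0) (h 0) (.inr 2) (h 2) (by simp) (by simp) (by simp)
      have := hside _ ha (.inr 1) (h 1) (.inr 2) (h 2) (by simp) (by simp) (by simp)
      have := hside _ ha (.inr 1) (h 1) (.inr 0) (h 0) (by simp) (by simp) (by simp)
      grind
    · have := hside _ ha (.inl 0) (h 0) (.inl 1) (h 1) (by simp) (by simp) (by simp)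
      have := hside _ ha (.inl 0) (h 0) (.inl 2) (h 2) (by simp) (by simp) (by simp)
      have := hside _ ha (.inl 1) (h 1) (.inl 2) (h 2) (by simp) (by simp) (by simp)
      have := hside _ ha (.inl 1) (h 1) (.inl 0) (h 0) (by simp) (by simp) (by simp)
      grind
    · have := hside _ ha _ hc _ hd (by simp) (by simp) (by simpa using hcd)
      have := hside _ hb _ hc _ hd (by simp) (by simp) (by simpa using hcd)
      have := hside _ hc _ ha _ hb (by simp) (by simp) (by simpa using hab)
      have := hside _ hd _ ha _ hb (by simp) (by simp) (by simpa using hab)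
      grind

/-- A path on `n` vertices whose first two vertices are joined to every other vertex: a planar
triangulation when `3 ≤ n`. -/
def doubleFan (n : ℕ) : SimpleGraph (Fin n) :=
  pathGraph n ⊔ fromRel fun i _ => i.val < 2

theorem doubleFan_isPlanar (n : ℕ) : IsPlanar (doubleFan n) := by
  refine isPlanar_of_induce_compl_le_hasse (s := {i | i.val < 2}) (Set.toFinite _) ?_ ?_
  · refine (Set.ncard_le_ncard_of_injOn Fin.val (t := Set.Iio 2) (fun i hi => hi)
      Fin.val_injective.injOn (Set.finite_Iio 2)).trans_eq ?_
    simp [Set.ncard_eq_toFinset_card']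
  · rintro ⟨i, hi⟩ ⟨j, hj⟩ hij
    have hpath : (pathGraph n).Adj i j := by
      rcases hij with h | h
      · exact h
      · exact absurd h.2 (not_or.mpr ⟨hi, hj⟩)
    rw [pathGraph, hasse_adj] at hpath
    exact hasse_adj.mpr <| hpath.imp (fun h => h.of_image (OrderEmbedding.subtype _))
      fun h => h.of_image (OrderEmbedding.subtype _)

theorem le_edgeCount_doubleFan (n : ℕ) : 3 * n ≤ edgeCount (doubleFan n) + 6 := by
  let g : Fin (n - 1) ⊕ Fin (n - 2) ⊕ Fin (n - 3) → Sym2 (Fin n)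
    | .inl i => s(⟨0, by have := i.2; omega⟩, ⟨i + 1, by omega⟩)
    | .inr (.inl i) => s(⟨1, by have := i.2; omega⟩, ⟨i + 2, by omega⟩)
    | .inr (.inr i) => s(⟨i + 2, by omega⟩, ⟨i + 3, by omega⟩)
  have hg : Function.Injective g := by
    rintro (i | i | i) (j | j | j) hij <;>
      simp only [g, Sym2.eq_iff, Fin.mk.injEq] at hij <;>
      grind
  have hsub : Set.range g ⊆ (doubleFan n).edgeSet := by
    rintro _ ⟨i | i | i, rfl⟩ <;> simp [g, doubleFan, pathGraph_adj]
  have hle := Set.ncard_le_ncard hsub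
  rw [← Set.image_univ, Set.ncard_image_of_injective _ hg, Set.ncard_univ] at hle
  simp only [Nat.card_eq_fintype_card, Fintype.card_sum, Fintype.card_fin] at hle
  unfold edgeCount
  omega

theorem planarSet_nonempty {n m : ℕ} (hm : m + 6 ≤ 3 * n) : (planarSet n m).Nonempty := by
  have := le_edgeCount_doubleFan n
  obtain ⟨H, hH, hHm⟩ := exists_subgraph_edgeCount (G := doubleFan n) (k := m) (by omega)
  exact ⟨H, (doubleFan_isPlanar n).mono hH, hHm⟩

/-! ### The switching -/

/-- The switching: the edge `xy` of `G` is replaced by `xv`. -/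
def moveEdge {V : Type*} (G : SimpleGraph V) (x y v : V) : SimpleGraph V :=
  G.deleteEdges {s(x, y)} ⊔ edge x v

section

variable {V : Type*} {G : SimpleGraph V} {x y v : V}

theorem edgeSet_moveEdge (hxv : x ≠ v) :
    (moveEdge G x y v).edgeSet = insert s(x, v) (G.edgeSet \ {s(x, y)}) := by
  rw [moveEdge, edgeSet_sup, edgeSet_deleteEdges, edgeSet_edge_of_ne hxv, Set.union_singleton]

theorem moveEdge_moveEdge (hxy : G.Adj x y) (hxv : x ≠ v) (hnadj : ¬ G.Adj x v) :
    moveEdge (moveEdge G x y v) x v y = G := by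
  have hmem : s(x, y) ∈ G.edgeSet := hxy
  rw [← edgeSet_inj, edgeSet_moveEdge hxy.ne, edgeSet_moveEdge hxv,
    Set.insert_sdiff_self_of_notMem fun h => hnadj h.1, Set.insert_sdiff_singleton,
    Set.insert_eq_of_mem hmem]

theorem edgeCount_moveEdge [Finite V] (hxy : G.Adj x y) (hxv : x ≠ v) (hnadj : ¬ G.Adj x v) :
    edgeCount (moveEdge G x y v) = edgeCount G := by
  have hmem : s(x, y) ∈ G.edgeSet := hxy
  rw [edgeCount, edgeSet_moveEdge hxv, Set.ncard_insert_of_notMem fun h => hnadj h.1,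
    Set.ncard_sdiff_singleton_add_one hmem, edgeCount]

theorem IsPlanar.moveEdge (hG : IsPlanar G) (hxv : ¬ G.Reachable x v) :
    IsPlanar (moveEdge G x y v) :=
  (hG.sup_edge hxv).mono (sup_le_sup_right (deleteEdges_le _) _)

theorem moveEdge_adj (hxv : x ≠ v) {u w : V} :
    (moveEdge G x y v).Adj u w ↔ G.Adj u w ∧ s(u, w) ≠ s(x, y) ∨ s(u, w) = s(x, v) := by
  rw [← mem_edgeSet, edgeSet_moveEdge hxv]
  exact or_comm

theorem moveEdge_adj_of_ne (hxv : x ≠ v) {u w : V} (hux : u ≠ x) (hwx : w ≠ x) :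
    (moveEdge G x y v).Adj u w ↔ G.Adj u w := by
  grind [moveEdge_adj]

theorem vertexDegree_moveEdge_left_le [Finite V] (hxy : G.Adj x y) (hxv : x ≠ v) :
    vertexDegree (moveEdge G x y v) x ≤ vertexDegree G x := by
  have hsub : (moveEdge G x y v).neighborSet x ⊆ insert v (G.neighborSet x \ {y}) := by
    intro w hw
    grind [moveEdge_adj, mem_neighborSet]
  have hle := (Set.ncard_le_ncard hsub).trans (Set.ncard_insert_le _ _)
  have hmem : y ∈ G.neighborSet x := hxy
  rwa [Set.ncard_sdiff_singleton_add_one hmem] at hle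

theorem vertexDegree_moveEdge_right_le [Finite V] (hxv : x ≠ v) :
    vertexDegree (moveEdge G x y v) v ≤ vertexDegree G v + 1 := by
  refine (Set.ncard_le_ncard (t := insert x (G.neighborSet v)) fun w hw => ?_).trans
    (Set.ncard_insert_le _ _)
  grind [moveEdge_adj, mem_neighborSet]

theorem vertexDegree_moveEdge_le [Finite V] (hxv : x ≠ v) {a : V} (hax : a ≠ x) (hav : a ≠ v) :
    vertexDegree (moveEdge G x y v) a ≤ vertexDegree G a := by
  refine Set.ncard_le_ncard fun w hw => ?_
  grind [moveEdge_adj, mem_neighborSet]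

theorem commonNeighbors_moveEdge_eq_empty (hxv : ¬ G.Reachable x v) :
    (moveEdge G x y v).commonNeighbors x v = ∅ := by
  have hne : x ≠ v := fun h => hxv (h ▸ .rfl)
  refine Set.eq_empty_of_forall_notMem fun w ⟨hxw, hvw⟩ => ?_
  rw [mem_neighborSet, moveEdge_adj hne] at hxw hvw
  have : ¬ (G.Adj x w ∧ G.Adj v w) := fun h => hxv (h.1.reachable.trans h.2.symm.reachable)
  have : ¬ G.Adj v x := fun h => hxv h.symm.reachable
  grind [G.irrefl]

theorem IsPlanar.exists_not_reachable_vertexDegree_le [Finite V] (hG : IsPlanar G)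
    (hdisc : ¬ G.Connected) (x : V) : ∃ v, ¬ G.Reachable x v ∧ vertexDegree G v ≤ 5 := by
  have hne : {v | ¬ G.Reachable x v}.Nonempty := by
    by_contra hempty
    have hreach : ∀ v, G.Reachable x v := fun v => not_not.mp fun hv => hempty ⟨v, hv⟩
    have : Nonempty V := ⟨x⟩
    exact hdisc ⟨fun u w => (hreach u).symm.trans (hreach w)⟩
  obtain ⟨v, hv, hdeg⟩ := hG.exists_ncard_neighbors_le hne
  refine ⟨v, hv, (Set.ncard_le_ncard fun w hw => ?_).trans hdeg⟩
  exact ⟨fun hxw => hv (hxw.trans (Adj.reachable hw).symm), hw⟩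

theorem moveEdge_mem_sparseDarts [Finite V] {C : ℕ} (hxy : G.Adj x y) (hxv : ¬ G.Reachable x v)
    (hx : vertexDegree G x ≤ C) (hv : vertexDegree G v < C) :
    (x, v) ∈ sparseDarts (moveEdge G x y v) C := by
  have hne : x ≠ v := fun h => hxv (h ▸ .rfl)
  exact ⟨(moveEdge_adj hne).mpr (.inr rfl), (vertexDegree_moveEdge_left_le hxy hne).trans hx,
    (vertexDegree_moveEdge_right_le hne).trans hv, commonNeighbors_moveEdge_eq_empty hxv⟩

end

/-! ### Counting the switchings -/

/-- The data `(((H, (x, v)), a), y)` from which a switching can be undone: `H` is the outcome, a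
graph in `S`, in which `xv` is the moved edge and `x, a, y` a path whose first two vertices have
degree at most `C`, so that `y` is determined by `x` up to `C ^ 2` choices. -/
def switchings {V : Type*} (S : Set (SimpleGraph V)) (C : ℕ) :
    Set (((SimpleGraph V × (V × V)) × V) × V) :=
  {⟨⟨⟨H, x, v⟩, a⟩, y⟩ | ((H ∈ S ∧ (x, v) ∈ sparseDarts H C) ∧ H.Adj x a ∧ vertexDegree H a ≤ C) ∧
    H.Adj a y}

theorem ncard_switchings_le {V : Type*} [Finite V] {S : Set (SimpleGraph V)} {C D : ℕ}
    (hD : ∀ H ∈ S, (sparseDarts H C).ncard ≤ D) :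
    (switchings S C).ncard ≤ C * (C * (D * S.ncard)) := by
  let darts : Set (SimpleGraph V × (V × V)) := {p | p.1 ∈ S ∧ p.2 ∈ sparseDarts p.1 C}
  let paths : Set ((SimpleGraph V × (V × V)) × V) :=
    {⟨⟨H, x, v⟩, a⟩ | (H, x, v) ∈ darts ∧ H.Adj x a ∧ vertexDegree H a ≤ C}
  have hdarts : darts.ncard ≤ D * S.ncard :=
    ncard_le_mul_of_ncard_section_le (fun _ h => h.1) fun H hH =>
      (Set.ncard_le_ncard fun _ h => h.2).trans (hD H hH)
  have hpaths : paths.ncard ≤ C * darts.ncard :=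
    ncard_le_mul_of_ncard_section_le (fun _ h => h.1) fun _ hp =>
      (Set.ncard_le_ncard fun _ h => h.2.1).trans hp.2.2.1
  have hswitchings : (switchings S C).ncard ≤ C * paths.ncard :=
    ncard_le_mul_of_ncard_section_le (fun _ h => h.1) fun _ hp =>
      (Set.ncard_le_ncard fun _ h => h.2).trans hp.2.2
  exact hswitchings.trans (Nat.mul_le_mul_left C (hpaths.trans (Nat.mul_le_mul_left C hdarts)))

theorem exists_mem_switchings {n m C : ℕ} (hC : 6 ≤ C) {G : SimpleGraph (Fin n)}
    (hG : G ∈ planarSet n m) (hdisc : ¬ G.Connected) {x : Fin n} (hx : x ∈ goodVertices G C) :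
    ∃ H v a y, (((H, (x, v)), a), y) ∈ switchings (planarSet n m) C ∧ moveEdge H x v y = G := by
  obtain ⟨hdx, a, hxa, hda, y, hxy, hay⟩ := hx
  rw [mem_neighborSet] at hxy hay
  obtain ⟨v, hxv, hdv⟩ := hG.1.exists_not_reachable_vertexDegree_le hdisc x
  have hne : x ≠ v := fun h => hxv (h ▸ .rfl)
  have hnadj : ¬ G.Adj x v := fun h => hxv h.reachable
  have hav : a ≠ v := fun h => hnadj (h ▸ hxa)
  refine ⟨moveEdge G x y v, v, a, y, ⟨⟨⟨⟨hG.1.moveEdge hxv, ?_⟩, ?_⟩, ?_, ?_⟩, ?_⟩,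
    moveEdge_moveEdge hxy hne hnadj⟩
  · exact (edgeCount_moveEdge hxy hne hnadj).trans hG.2
  · exact moveEdge_mem_sparseDarts hxy hxv hdx (hdv.trans_lt hC)
  · grind [moveEdge_adj, G.irrefl]
  · exact (vertexDegree_moveEdge_le hne hxa.ne' hav).trans hda
  · exact (moveEdge_adj_of_ne hne hxa.ne' hxy.ne').mpr hay

/-- The pairs of a disconnected graph of `𝒫(n,m)` and a vertex at which it can be switched. -/
def switchSites (n m C : ℕ) : Set (SimpleGraph (Fin n) × Fin n) :=
  {p | (p.1 ∈ planarSet n m ∧ ¬ p.1.Connected) ∧ p.2 ∈ goodVertices p.1 C}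

theorem ncard_switchSites_le {n m C D : ℕ} (hC : 6 ≤ C)
    (hD : ∀ H ∈ planarSet n m, (sparseDarts H C).ncard ≤ D) :
    (switchSites n m C).ncard ≤ C * (C * (D * (planarSet n m).ncard)) := by
  let undo : ((SimpleGraph (Fin n) × (Fin n × Fin n)) × Fin n) × Fin n →
      SimpleGraph (Fin n) × Fin n
    | (((H, (x, v)), _), y) => (moveEdge H x v y, x)
  have hsub : switchSites n m C ⊆ undo '' switchings (planarSet n m) C := by
    rintro ⟨G, x⟩ ⟨⟨hG, hdisc⟩, hx⟩
    obtain ⟨H, v, a, y, hmem, hundo⟩ := exists_mem_switchings hC hG hdisc hx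
    exact ⟨_, hmem, Prod.ext hundo rfl⟩
  exact (Set.ncard_le_ncard hsub).trans
    ((Set.ncard_image_le (Set.toFinite _)).trans (ncard_switchings_le hD))

theorem ncard_disconnected_mul_le {n m d C : ℕ} (hd : 3 * n = m + d) (hC : 1728 ≤ C) :
    {G ∈ planarSet n m | ¬ G.Connected}.ncard * n ≤
      (2 * C ^ 5 + 2 * C ^ 2 + 2) * d * (planarSet n m).ncard := by
  set N := (planarSet n m).ncard
  set N' := {G ∈ planarSet n m | ¬ G.Connected}.ncard
  have hedges : ∀ G ∈ planarSet n m, 3 * Nat.card (Fin n) ≤ edgeCount G + d := fun G hG => by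
    rw [Nat.card_fin, hG.2, hd]
  have hupper : (switchSites n m C).ncard ≤ C * (C * (2 * C ^ 2 * d * N)) :=
    ncard_switchSites_le (hC.trans' (by norm_num)) fun H hH =>
      hH.1.ncard_sparseDarts_le (hedges H hH) C
  have hlower : N' * (n - (2 * C ^ 2 + 2) * d) ≤ C * (switchSites n m C).ncard := by
    refine ncard_mul_le_of_le_ncard_section fun G hG => Nat.sub_le_iff_le_add.mpr ?_
    have hgood := hG.1.1.card_le_goodVertices (hedges G hG.1) hC
    have hsection : (goodVertices G C).ncard ≤ {x | (G, x) ∈ switchSites n m C}.ncard :=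
      Set.ncard_le_ncard fun x hx => ⟨hG, hx⟩
    rw [Nat.card_fin] at hgood
    exact hgood.trans (Nat.add_le_add_right (Nat.mul_le_mul_left C hsection) _)
  have hNN' : N' ≤ N := Set.ncard_le_ncard (Set.sep_subset _ _)
  calc N' * n ≤ N' * (n - (2 * C ^ 2 + 2) * d) + N' * ((2 * C ^ 2 + 2) * d) := by
        rw [← mul_add]
        exact Nat.mul_le_mul_left _ le_tsub_add
    _ ≤ C * (C * (C * (2 * C ^ 2 * d * N))) + N * ((2 * C ^ 2 + 2) * d) :=
        Nat.add_le_add (hlower.trans (Nat.mul_le_mul_left C hupper)) (Nat.mul_le_mul_right _ hNN')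
    _ = (2 * C ^ 5 + 2 * C ^ 2 + 2) * d * N := by ring

theorem planarProb_connected_le_one (n m : ℕ) :
    planarProb n m (fun G => G.Connected) ≤ 1 :=
  div_le_one_of_le₀ (by exact_mod_cast Set.ncard_le_ncard (Set.sep_subset _ _))
    (Nat.cast_nonneg _)

theorem one_sub_le_planarProb_connected {n m C : ℕ} (hm : m + 6 ≤ 3 * n) (hC : 1728 ≤ C) :
    1 - (2 * C ^ 5 + 2 * C ^ 2 + 2) * ((3 * n - m : ℝ) / n) ≤
      planarProb n m fun G => G.Connected := by
  obtain ⟨d, hd⟩ := Nat.exists_eq_add_of_le (show m ≤ 3 * n by omega)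
  have hdisc := ncard_disconnected_mul_le hd hC
  have hsplit : {G ∈ planarSet n m | G.Connected}.ncard +
      {G ∈ planarSet n m | ¬ G.Connected}.ncard = (planarSet n m).ncard :=
    Set.ncard_inter_add_ncard_sdiff_eq_ncard _ _
  have hn : (0 : ℝ) < n := by exact_mod_cast (by omega : 0 < n)
  have hN : (0 : ℝ) < (planarSet n m).ncard := by
    exact_mod_cast (Set.ncard_pos).mpr (planarSet_nonempty hm)
  have hd : (3 * n - m : ℝ) = d := sub_eq_of_eq_add' (by exact_mod_cast hd)
  rify at hdisc hsplit
  rw [← le_div_iff₀ hn] at hdisc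
  rw [planarProb, le_div_iff₀ hN, hd]
  linear_combination hdisc - hsplit

theorem connected_whp (m : ℕ → ℕ)
    (hub : ∀ᶠ n : ℕ in atTop, (m n : ℝ) ≤ 3 * (n : ℝ) - 6)
    (ho : Tendsto (fun n : ℕ => (3 * (n : ℝ) - (m n : ℝ)) / (n : ℝ)) atTop (nhds 0)) :
    Tendsto (fun n : ℕ => planarProb n (m n) fun G => G.Connected) atTop (nhds 1) := by
  obtain ⟨C, hC⟩ : ∃ C : ℕ, 1728 ≤ C := ⟨_, le_rfl⟩
  have hlower : Tendsto (fun n : ℕ =>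
      1 - (2 * (C : ℝ) ^ 5 + 2 * C ^ 2 + 2) * ((3 * n - m n) / n)) atTop (nhds 1) := by
    simpa using (ho.const_mul (2 * (C : ℝ) ^ 5 + 2 * C ^ 2 + 2)).const_sub 1
  refine tendsto_of_tendsto_of_tendsto_of_le_of_le' hlower tendsto_const_nhds ?_
    (.of_forall fun n => planarProb_connected_le_one n (m n))
  filter_upwards [hub] with n hn
  have hm : (m n : ℝ) + 6 ≤ 3 * n := by linarith
  exact one_sub_le_planarProb_connected (by exact_mod_cast hm) hC
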